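/- (Stanley) For every natural number n ≥ 1, the integer sequence c_k := p_k(n,n) − b_k(n), 0 ≤ k ≤ n², is symmetric and unimodal; precisely: c_k = c_{n²−k} for all 0 ≤ k ≤ n², and c_{k−1} ≤ c_k for all k with 1 ≤ k and 2k ≤ n². Equivalently, the polynomial binom(2n,n)_q − ∏_{i=1}^n (1+q^{2i−1}) has a symmetric unimodal sequence of coefficients. -/

import Mathlib

/-- `rectPartitions k l m` is the number of integer partitions of `k` fitting in an
`l × m` rectangle: at most `l` parts, each part at most `m`. -/
noncomputable def rectPartitions (k l m : ℕ) : ℕ :=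
  Nat.card {π : Nat.Partition k // Multiset.card π.parts ≤ l ∧ ∀ i ∈ π.parts, i ≤ m}

/-- `distinctOddPartitions k n` is the number of partitions of `k` into distinct odd
parts, each part at most `2n - 1`. -/
noncomputable def distinctOddPartitions (k n : ℕ) : ℕ :=
  Nat.card {π : Nat.Partition k // π.parts.Nodup ∧ ∀ i ∈ π.parts, Odd i ∧ i ≤ 2 * n - 1}

/-!
Sorted `n`-subsets of `{0, …, 2n - 1}` correspond to partitions in an `n × n` box, the sum of the
elements being the size of the partition up to the shift `n.choose 2`. On functions of subsets,
`sl₂` acts by a raising operator `U` which increases the sum by one, and `UᵀU - UUᵀ` is diagonal,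
with positive entries below the middle degree; hence `U` is injective there. Moreover `U` commutes
with conjugation of partitions, so it maps the functions changing sign under conjugation injectively
from degree `k` to degree `k + 1`. In degree `k` these form a space whose dimension is half the
number of partitions that are not self-conjugate, and cutting a self-conjugate partition into its
diagonal hooks identifies the self-conjugate ones with the partitions into distinct odd parts. So
this dimension is `c_k / 2`. The symmetry comes from complementing partitions in the box.
-/

namespace Stanley

open Finset Function Matrix

section AntiInvariant

variable {K α β : Type*} [Field K]

/-- The functions supported on `A` which change sign under `τ`, as a subspace of `α → K`. For an
involution `τ` preserving `A`, its dimension is half the number of non-fixed points in `A`. -/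
def antiInvariant (K : Type*) [Field K] (τ : α → α) (A : Finset α) : Submodule K (α → K) where
  carrier := {f | (∀ a, f (τ a) = -f a) ∧ ∀ a ∉ A, f a = 0}
  zero_mem' := by simp
  add_mem' := by
    rintro f g ⟨hf, hf'⟩ ⟨hg, hg'⟩
    refine ⟨fun a ↦ ?_, fun a ha ↦ ?_⟩
    · simp [hf, hg, add_comm]
    · simp [hf' a ha, hg' a ha]
  smul_mem' := by
    rintro c f ⟨hf, hf'⟩
    refine ⟨fun a ↦ ?_, fun a ha ↦ ?_⟩
    · simp [hf]
    · simp [hf' a ha]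

/-- The matrix of the projection `f ↦ 2⁻¹ • (f - f ∘ τ)`, cut off outside `A`, onto
`antiInvariant K τ A`; it serves to read off the dimension of that space as a trace. -/
def antiProj (K : Type*) [Field K] [DecidableEq α] (τ : α → α) (A : Finset α) : Matrix α α K :=
  of fun a b ↦
    if a ∈ A then 2⁻¹ * ((if b = a then 1 else 0) - if b = τ a then 1 else 0) else 0

theorem antiProj_mulVec_apply [Fintype α] [DecidableEq α] (τ : α → α) (A : Finset α)
    (f : α → K) (a : α) :
    (antiProj K τ A *ᵥ f) a = if a ∈ A then 2⁻¹ * (f a - f (τ a)) else 0 := by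
  by_cases ha : a ∈ A <;>
    simp [antiProj, mulVec, dotProduct, ha, mul_assoc, sub_mul, ← mul_sum, sum_sub_distrib]

theorem isProj_antiProj [CharZero K] [Fintype α] [DecidableEq α] {τ : α → α}
    (hτ : Involutive τ) {A : Finset α} (hA : ∀ a ∈ A, τ a ∈ A) :
    LinearMap.IsProj (antiInvariant K τ A) (toLin' (antiProj K τ A)) where
  map_mem f := by
    have hA' (a : α) : τ a ∈ A ↔ a ∈ A := ⟨fun h ↦ hτ a ▸ hA _ h, hA a⟩
    refine ⟨fun a ↦ ?_, fun a ha ↦ ?_⟩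
    · simp only [toLin'_apply, antiProj_mulVec_apply, hA', hτ a]
      split_ifs <;> ring
    · simp [antiProj_mulVec_apply, ha]
  map_id f hf := by
    ext a
    rw [toLin'_apply, antiProj_mulVec_apply]
    split_ifs with ha
    · rw [hf.1]; ring
    · exact (hf.2 a ha).symm

theorem two_mul_finrank_antiInvariant [CharZero K] [Finite α] [DecidableEq α] {τ : α → α}
    (hτ : Involutive τ) {A : Finset α} (hA : ∀ a ∈ A, τ a ∈ A) :
    2 * Module.finrank K (antiInvariant K τ A) + #{a ∈ A | τ a = a} = #A := by
  cases nonempty_fintype α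
  have htrace : (antiProj K τ A).trace = 2⁻¹ * (#A - #{a ∈ A | τ a = a}) := by
    simp [trace, antiProj, ← mul_sum, eq_comm]
  have hfinrank := (isProj_antiProj (K := K) hτ hA).trace
  rw [trace_toLin'_eq, htrace, inv_mul_eq_iff_eq_mul₀ two_ne_zero] at hfinrank
  rw [← Nat.cast_inj (R := K)]
  push_cast
  linear_combination -hfinrank

theorem card_sub_card_fixed_le [CharZero K] [Finite α] [Finite β] [DecidableEq α] [DecidableEq β]
    {σ : α → α} {τ : β → β} (hσ : Involutive σ) (hτ : Involutive τ) {A : Finset α} {B : Finset β}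
    (hA : ∀ a ∈ A, σ a ∈ A) (hB : ∀ b ∈ B, τ b ∈ B)
    (U : (α → K) →ₗ[K] (β → K)) (hU : ∀ f ∈ antiInvariant K σ A, U f ∈ antiInvariant K τ B)
    (hU₀ : ∀ f ∈ antiInvariant K σ A, U f = 0 → f = 0) :
    (#A : ℤ) - #{a ∈ A | σ a = a} ≤ #B - #{b ∈ B | τ b = b} := by
  have hinj : Injective (U.restrict hU) := by
    rw [← LinearMap.ker_eq_bot, LinearMap.ker_eq_bot']
    exact fun f hf ↦ Subtype.ext (hU₀ f f.2 (congrArg Subtype.val hf))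
  have hle := LinearMap.finrank_le_finrank_of_injective hinj
  have hdimA := two_mul_finrank_antiInvariant (K := K) hσ hA
  have hdimB := two_mul_finrank_antiInvariant (K := K) hτ hB
  omega

end AntiInvariant

section Commutator

variable {ι : Type*} [Fintype ι] [DecidableEq ι]

theorem eq_zero_of_mulVec_eq_zero_of_commutator_eq_diagonal {A : Matrix ι ι ℝ} {h : ι → ℝ}
    (hA : Aᵀ * A - A * Aᵀ = diagonal h) {x : ι → ℝ} (hx : ∀ i, x i ≠ 0 → 0 < h i)
    (hAx : A *ᵥ x = 0) : x = 0 := by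
  have hnonneg (i : ι) : 0 ≤ h i * x i ^ 2 := by
    by_cases hi : x i = 0
    · simp [hi]
    · exact mul_nonneg (hx i hi).le (sq_nonneg _)
  have hsum : Aᵀ *ᵥ x ⬝ᵥ Aᵀ *ᵥ x + ∑ i, h i * x i ^ 2 = 0 := by
    calc Aᵀ *ᵥ x ⬝ᵥ Aᵀ *ᵥ x + ∑ i, h i * x i ^ 2
        = x ⬝ᵥ (A * Aᵀ) *ᵥ x + x ⬝ᵥ diagonal h *ᵥ x := by
          congr 1
          · rw [← mulVec_mulVec, dotProduct_mulVec x, ← mulVec_transpose]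
          · simp only [dotProduct, mulVec_diagonal]
            exact sum_congr rfl fun i _ ↦ by ring
      _ = x ⬝ᵥ Aᵀ *ᵥ (A *ᵥ x) := by
          rw [← dotProduct_add, ← add_mulVec, ← hA, add_sub_cancel, mulVec_mulVec]
      _ = 0 := by simp [hAx]
  have hzero : ∑ i, h i * x i ^ 2 = 0 := by
    have h₁ : 0 ≤ Aᵀ *ᵥ x ⬝ᵥ Aᵀ *ᵥ x := sum_nonneg fun i _ ↦ mul_self_nonneg _
    have h₂ : 0 ≤ ∑ i, h i * x i ^ 2 := sum_nonneg fun i _ ↦ hnonneg i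
    linarith
  ext i
  by_contra hi
  have hterm := (sum_eq_zero_iff_of_nonneg fun i _ ↦ hnonneg i).1 hzero i (mem_univ i)
  exact (mul_pos (hx i hi) (sq_pos_of_ne_zero hi)).ne' hterm

end Commutator

section Hop

variable {α : Type*} [DecidableEq α] {a b c d : α} {S T : Finset α}

/-- The move of a particle from site `a` to site `b`: it sends `S` to `(S \ {a}) ∪ {b}` and is
defined when `a ∈ S` and `b ∉ S`. Encoding it as a partial equivalence makes `PEquiv.toMatrix` turn
composition into products of matrices and inversion into transposition. -/
def hop (a b : α) : Finset α ≃. Finset α where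
  toFun S := if a ∈ S ∧ b ∉ S then some (insert b (S.erase a)) else none
  invFun S := if b ∈ S ∧ a ∉ S then some (insert a (S.erase b)) else none
  inv S T := by
    simp only [Option.ite_none_right_eq_some, Option.some.injEq]
    grind

theorem mem_hop : T ∈ hop a b S ↔ (a ∈ S ∧ b ∉ S) ∧ insert b (S.erase a) = T := by
  simp [hop]

theorem hop_symm (a b : α) : (hop a b).symm = hop b a := rfl

theorem hop_isSome : (hop a b S).isSome ↔ a ∈ S ∧ b ∉ S := by
  simp [Option.isSome_iff_exists, hop]

theorem hop_trans_comm (had : a ≠ d) (hbc : b ≠ c) :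
    (hop a b).trans (hop c d) = (hop c d).trans (hop a b) := by
  ext S T : 2
  simp only [← Option.mem_def, PEquiv.mem_trans, mem_hop]
  grind

theorem card_eq_of_mem_hop (h : T ∈ hop a b S) : #T = #S := by
  obtain ⟨⟨ha, hb⟩, rfl⟩ := mem_hop.1 h
  rw [card_insert_of_notMem (by simp [hb]), card_erase_add_one ha]

theorem sum_add_eq_of_mem_hop {M : Type*} [AddCommMonoid M] (h : T ∈ hop a b S) (f : α → M) :
    ∑ i ∈ T, f i + f a = ∑ i ∈ S, f i + f b := by
  obtain ⟨⟨ha, hb⟩, rfl⟩ := mem_hop.1 h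
  rw [sum_insert (by simp [hb]), ← add_sum_erase S f ha, add_assoc, add_comm]
  abel

theorem toMatrix_ofSet {ι : Type*} [DecidableEq ι] (s : Set ι) [DecidablePred (· ∈ s)]
    (R : Type*) [Zero R] [One R] :
    (PEquiv.ofSet s).toMatrix = (diagonal fun i ↦ if i ∈ s then 1 else 0 : Matrix ι ι R) := by
  ext i j
  simp only [PEquiv.toMatrix_apply, PEquiv.mem_ofSet_iff, diagonal_apply]
  grind

theorem hop_toMatrix_commutator [Fintype α] (R : Type*) [Ring R] (a b : α) :
    ((hop a b).toMatrix * (hop b a).toMatrix - (hop b a).toMatrix * (hop a b).toMatrix :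
      Matrix (Finset α) (Finset α) R) =
      diagonal fun S ↦ (if a ∈ S then 1 else 0) - if b ∈ S then 1 else 0 := by
  have hself (a b : α) : ((hop a b).toMatrix * (hop b a).toMatrix : Matrix _ _ R) =
      diagonal fun S ↦ if a ∈ S ∧ b ∉ S then 1 else 0 := by
    rw [← PEquiv.toMatrix_trans, ← hop_symm a b, PEquiv.self_trans_symm, toMatrix_ofSet]
    simp [hop_isSome]
  rw [hself, hself, diagonal_sub]
  congr 1
  ext S
  by_cases ha : a ∈ S <;> by_cases hb : b ∈ S <;> simp [ha, hb]

end Hop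

section Raising

variable {M : ℕ}

/-- The squared matrix coefficient from site `i` to site `i + 1` of the raising operator in the
irreducible representation of `sl₂` of dimension `M + 1`. -/
noncomputable def raisingWeight (i : Fin M) : ℝ := ((i : ℕ) + 1) * (M - (i : ℕ))

theorem raisingWeight_nonneg (i : Fin M) : 0 ≤ raisingWeight i := by
  have hle : ((i : ℕ) : ℝ) ≤ M := mod_cast i.2.le
  exact mul_nonneg (by positivity) (by linarith)

theorem raisingWeight_rev (i : Fin M) : raisingWeight i.rev = raisingWeight i := by
  have hrev : ((i.rev : ℕ) : ℝ) = M - ((i : ℕ) + 1) := by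
    rw [Fin.val_rev, Nat.cast_sub i.2]; push_cast; rfl
  rw [raisingWeight, raisingWeight, hrev]
  ring

/-- The raising operator of `sl₂` on the exterior algebra of its irreducible representation of
dimension `M + 1`, in the basis indexed by subsets: it moves one element `i` to `i + 1` in all
possible ways. The basis is normalised so that the lowering operator is the transpose. -/
noncomputable def raising (M : ℕ) : Matrix (Finset (Fin (M + 1))) (Finset (Fin (M + 1))) ℝ :=
  ∑ i : Fin M, √(raisingWeight i) • (hop i.succ i.castSucc).toMatrix

theorem raising_apply (S T : Finset (Fin (M + 1))) :
    raising M S T =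
      ∑ i : Fin M, √(raisingWeight i) * if T ∈ hop i.succ i.castSucc S then 1 else 0 := by
  simp [raising, Matrix.sum_apply, PEquiv.toMatrix_apply]

theorem sum_raisingWeight_mul_sub (S : Finset (Fin (M + 1))) :
    ∑ i : Fin M, raisingWeight i *
        ((if i.castSucc ∈ S then 1 else 0) - if i.succ ∈ S then 1 else 0) =
      M * #S - 2 * ∑ j ∈ S, ((j : ℕ) : ℝ) := by
  have hite (f : Fin (M + 1) → ℝ) : ∑ j ∈ S, f j = ∑ j, if j ∈ S then f j else 0 := by simp
  have hcastSucc : ∑ j ∈ S, ((j : ℕ) + 1 : ℝ) * (M - (j : ℕ)) =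
      ∑ i : Fin M, raisingWeight i * (if i.castSucc ∈ S then 1 else 0) := by
    rw [hite, Fin.sum_univ_castSucc]
    simp [raisingWeight]
  have hsucc : ∑ j ∈ S, ((j : ℕ) : ℝ) * (M + 1 - (j : ℕ)) =
      ∑ i : Fin M, raisingWeight i * (if i.succ ∈ S then 1 else 0) := by
    rw [hite, Fin.sum_univ_succ]
    simp [raisingWeight]
  calc _ = ∑ j ∈ S, ((j : ℕ) + 1 : ℝ) * (M - (j : ℕ)) -
          ∑ j ∈ S, ((j : ℕ) : ℝ) * (M + 1 - (j : ℕ)) := by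
        rw [hcastSucc, hsucc, ← sum_sub_distrib]
        simp only [mul_sub (raisingWeight _)]
    _ = ∑ j ∈ S, (M - 2 * ((j : ℕ) : ℝ)) := by
        rw [← sum_sub_distrib]
        exact sum_congr rfl fun j _ ↦ by ring
    _ = _ := by rw [sum_sub_distrib, ← mul_sum, sum_const, nsmul_eq_mul, mul_comm]

theorem raising_commutator (M : ℕ) :
    (raising M)ᵀ * raising M - raising M * (raising M)ᵀ =
      diagonal fun S : Finset (Fin (M + 1)) ↦ M * #S - 2 * ∑ j ∈ S, ((j : ℕ) : ℝ) := by
  have htranspose : (raising M)ᵀ =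
      ∑ i : Fin M, √(raisingWeight i) • (hop i.castSucc i.succ).toMatrix := by
    simp [raising, transpose_sum, ← PEquiv.toMatrix_symm, hop_symm]
  have hoff (i j : Fin M) (hij : i ≠ j) :
      ((hop i.castSucc i.succ).toMatrix * (hop j.succ j.castSucc).toMatrix : Matrix _ _ ℝ) -
        (hop j.succ j.castSucc).toMatrix * (hop i.castSucc i.succ).toMatrix = 0 := by
    rw [← PEquiv.toMatrix_trans, ← PEquiv.toMatrix_trans, hop_trans_comm (by simpa) (by simpa),
      sub_self]
  rw [htranspose, raising]
  calc _ = ∑ i : Fin M, ∑ j : Fin M, (√(raisingWeight i) * √(raisingWeight j)) •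
          ((hop i.castSucc i.succ).toMatrix * (hop j.succ j.castSucc).toMatrix -
            (hop j.succ j.castSucc).toMatrix * (hop i.castSucc i.succ).toMatrix) := by
        simp only [smul_sub, sum_sub_distrib, sum_mul_sum, smul_mul_smul_comm]
        congr 1
        rw [sum_comm]
        simp only [mul_comm]
    _ = ∑ i : Fin M, raisingWeight i •
          ((hop i.castSucc i.succ).toMatrix * (hop i.succ i.castSucc).toMatrix -
            (hop i.succ i.castSucc).toMatrix * (hop i.castSucc i.succ).toMatrix) := by
        refine sum_congr rfl fun i _ ↦ ?_
        rw [sum_eq_single i (fun j _ hji ↦ by rw [hoff i j hji.symm, smul_zero]) (by simp),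
          Real.mul_self_sqrt (raisingWeight_nonneg i)]
    _ = _ := by
        simp only [hop_toMatrix_commutator, ← diagonal_smul, ← sum_raisingWeight_mul_sub]
        ext S T
        rw [Matrix.sum_apply]
        obtain rfl | hST := eq_or_ne S T
        · simp
        · simp [hST]

end Raising

section Conjugation

variable {t : ℕ} {S T : Finset (Fin t)}

/-- Complement after reversal. Reading a subset of `Fin t` as the steps of a lattice path, i.e. as
the boundary of a partition in a box, this is conjugation of partitions. -/
def conj (S : Finset (Fin t)) : Finset (Fin t) := (S.map Fin.revPerm.toEmbedding)ᶜ

theorem mem_conj {i : Fin t} : i ∈ conj S ↔ i.rev ∉ S := by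
  simp [conj]

theorem conj_involutive : Involutive (conj : Finset (Fin t) → Finset (Fin t)) := fun S ↦ by
  ext i
  simp [mem_conj]

theorem card_conj_add_card (S : Finset (Fin t)) : #(conj S) + #S = t := by
  simpa [conj] using card_compl_add_card (S.map Fin.revPerm.toEmbedding)

theorem sum_map_rev_add_sum (S : Finset (Fin t)) :
    ∑ i ∈ S.map Fin.revPerm.toEmbedding, (i : ℕ) + ∑ i ∈ S, (i : ℕ) = #S * (t - 1) := by
  rw [sum_map, ← sum_add_distrib]
  refine sum_const_nat fun i _ ↦ ?_
  simp only [Equiv.toEmbedding_apply, Fin.revPerm_apply, Fin.val_rev]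
  omega

theorem sum_conj_add (S : Finset (Fin t)) :
    ∑ i ∈ conj S, (i : ℕ) + #S * (t - 1) = ∑ i ∈ S, (i : ℕ) + ∑ i : Fin t, (i : ℕ) := by
  rw [← sum_map_rev_add_sum, ← sum_compl_add_sum (S.map Fin.revPerm.toEmbedding), conj]
  ring

theorem conj_mem_hop_conj {a b : Fin t} : conj T ∈ hop a b (conj S) ↔ T ∈ hop b.rev a.rev S := by
  simp only [mem_hop, Finset.ext_iff, mem_insert, mem_erase, mem_conj]
  rw [← Fin.revPerm.forall_congr_right]
  simp only [Fin.revPerm_apply, Fin.rev_rev, Fin.rev_eq_iff]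
  grind

theorem raising_conj {M : ℕ} (S T : Finset (Fin (M + 1))) :
    raising M (conj S) (conj T) = raising M S T := by
  rw [raising_apply, raising_apply, ← Equiv.sum_comp Fin.revPerm]
  simp only [Fin.revPerm_apply, raisingWeight_rev, conj_mem_hop_conj, Fin.rev_succ,
    Fin.rev_castSucc, Fin.rev_rev]

end Conjugation

section GradedSubsets

variable {t : ℕ} {S : Finset (Fin t)}

/-- The `n`-element subsets of `Fin t` with element sum `s`. Subtracting `0, 1, …, n - 1` from the
sorted elements turns them into the partitions of `s - n.choose 2` in an `n × (t - n)` box. -/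
def gradedSubsets (t n s : ℕ) : Finset (Finset (Fin t)) :=
  {S ∈ powersetCard n univ | ∑ i ∈ S, (i : ℕ) = s}

theorem mem_gradedSubsets {n s : ℕ} :
    S ∈ gradedSubsets t n s ↔ #S = n ∧ ∑ i ∈ S, (i : ℕ) = s := by
  simp [gradedSubsets]

theorem conj_mem_gradedSubsets {n s : ℕ} {S : Finset (Fin (n + n))}
    (hS : S ∈ gradedSubsets (n + n) n s) : conj S ∈ gradedSubsets (n + n) n s := by
  obtain ⟨hcard, hsum⟩ := mem_gradedSubsets.1 hS
  have hcard' := card_conj_add_card S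
  have hsum' := sum_conj_add S
  have htotal : ∑ i : Fin (n + n), (i : ℕ) = n * (n + n - 1) := by
    rw [Fin.sum_univ_eq_sum_range (fun i ↦ i), sum_range_id, ← mul_two, mul_right_comm,
      Nat.mul_div_cancel _ two_pos]
  rw [hcard] at hsum'
  rw [mem_gradedSubsets]
  omega

theorem mem_gradedSubsets_of_raising_ne_zero {M n s : ℕ} {S T : Finset (Fin (M + 1))}
    (hST : raising M S T ≠ 0) (hT : T ∈ gradedSubsets (M + 1) n s) :
    S ∈ gradedSubsets (M + 1) n (s + 1) := by
  rw [raising_apply] at hST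
  obtain ⟨i, -, hi⟩ := exists_ne_zero_of_sum_ne_zero hST
  have hmem : T ∈ hop i.succ i.castSucc S := by
    by_contra h
    simp [h] at hi
  have hcard := card_eq_of_mem_hop hmem
  have hsum := sum_add_eq_of_mem_hop hmem fun j ↦ (j : ℕ)
  rw [mem_gradedSubsets] at hT ⊢
  simp only [Fin.val_succ, Fin.val_castSucc] at hsum
  omega

theorem raising_mulVec_mem_antiInvariant {M n s : ℕ}
    {f : Finset (Fin (M + 1)) → ℝ} (hf : f ∈ antiInvariant ℝ conj (gradedSubsets (M + 1) n s)) :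
    raising M *ᵥ f ∈ antiInvariant ℝ conj (gradedSubsets (M + 1) n (s + 1)) := by
  refine ⟨fun S ↦ ?_, fun S hS ↦ ?_⟩
  · simp only [mulVec, dotProduct]
    rw [← Equiv.sum_comp (conj_involutive.toPerm conj), ← sum_neg_distrib]
    simp [raising_conj, hf.1]
  · rw [mulVec, dotProduct]
    refine sum_eq_zero fun T _ ↦ ?_
    by_contra! h
    obtain ⟨hST, hT⟩ := mul_ne_zero_iff.1 h
    exact hS (mem_gradedSubsets_of_raising_ne_zero hST (not_imp_comm.1 (hf.2 T) hT))

theorem eq_zero_of_raising_mulVec_eq_zero {M n s : ℕ} (hs : 2 * s < M * n)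
    {f : Finset (Fin (M + 1)) → ℝ} (hf : ∀ S ∉ gradedSubsets (M + 1) n s, f S = 0)
    (hf₀ : raising M *ᵥ f = 0) : f = 0 := by
  refine eq_zero_of_mulVec_eq_zero_of_commutator_eq_diagonal (raising_commutator M)
    (fun S hS ↦ ?_) hf₀
  obtain ⟨hcard, hsum⟩ := mem_gradedSubsets.1 (not_imp_comm.1 (hf S) hS)
  rw [← Nat.cast_sum, hcard, hsum, sub_pos]
  exact_mod_cast hs

theorem card_gradedSubsets_sub_le {n s : ℕ} (hs : 2 * s + n < (n + n) * n) :
    (#(gradedSubsets (n + n) n s) : ℤ) - #{S ∈ gradedSubsets (n + n) n s | conj S = S} ≤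
      #(gradedSubsets (n + n) n (s + 1)) - #{S ∈ gradedSubsets (n + n) n (s + 1) | conj S = S} := by
  have hA (s : ℕ) : ∀ S ∈ gradedSubsets (n + n) n s, conj S ∈ gradedSubsets (n + n) n s :=
    fun _ ↦ conj_mem_gradedSubsets
  obtain ⟨M, hM⟩ : ∃ M, n + n = M + 1 :=
    Nat.exists_eq_succ_of_ne_zero fun h ↦ by simp [h] at hs
  generalize n + n = t at *
  subst hM
  exact card_sub_card_fixed_le conj_involutive conj_involutive (hA s) (hA (s + 1))
    (toLin' (raising M)) (fun f hf ↦ raising_mulVec_mem_antiInvariant hf)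
    fun f hf hf₀ ↦ eq_zero_of_raising_mulVec_eq_zero (n := n) (s := s) (by linarith) hf.2 hf₀

theorem map_rev_mem_gradedSubsets_iff {n s s' : ℕ} (hs : s + s' = n * (t - 1))
    {S : Finset (Fin t)} :
    Fin.revPerm.finsetCongr S ∈ gradedSubsets t n s' ↔ S ∈ gradedSubsets t n s := by
  simp only [mem_gradedSubsets, Equiv.finsetCongr_apply, card_map]
  refine and_congr_right fun hcard ↦ ?_
  have hsum := sum_map_rev_add_sum S
  rw [hcard] at hsum
  omega

theorem conj_map_rev (S : Finset (Fin t)) :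
    conj (Fin.revPerm.finsetCongr S) = Fin.revPerm.finsetCongr (conj S) := by
  ext i
  simp [conj]

theorem card_gradedSubsets_rev {n s s' : ℕ} (hs : s + s' = n * (t - 1)) :
    #(gradedSubsets t n s) = #(gradedSubsets t n s') :=
  card_equiv Fin.revPerm.finsetCongr fun _ ↦ (map_rev_mem_gradedSubsets_iff hs).symm

theorem card_filter_conj_eq_gradedSubsets_rev {n s s' : ℕ} (hs : s + s' = n * (t - 1)) :
    #{S ∈ gradedSubsets t n s | conj S = S} = #{S ∈ gradedSubsets t n s' | conj S = S} :=
  card_equiv Fin.revPerm.finsetCongr fun S ↦ by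
    rw [mem_filter, mem_filter, map_rev_mem_gradedSubsets_iff hs, conj_map_rev,
      Equiv.apply_eq_iff_eq]

end GradedSubsets

section DiagonalHooks

variable {n : ℕ}

/-- The self-conjugate subset whose elements in the upper half are the `n + j` with `j ∈ T`; in
terms of partitions, the one whose diagonal hooks have the lengths `2 * j + 1` with `j ∈ T`. -/
def ofDiagonalHooks (T : Finset (Fin n)) : Finset (Fin (n + n)) :=
  Tᶜ.map (Fin.revPerm.toEmbedding.trans (Fin.castAddEmb n)) ∪ T.map (Fin.addNatEmb n)

theorem castAdd_ne_addNat (i j : Fin n) : Fin.castAdd n i ≠ j.addNat n :=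
  Fin.ne_of_lt (i.2.trans_le (Nat.le_add_left n j))

theorem castAdd_mem_ofDiagonalHooks {T : Finset (Fin n)} {i : Fin n} :
    Fin.castAdd n i ∈ ofDiagonalHooks T ↔ i.rev ∉ T := by
  simp [ofDiagonalHooks, Fin.rev_eq_iff, (castAdd_ne_addNat _ _).symm]

theorem addNat_mem_ofDiagonalHooks {T : Finset (Fin n)} {j : Fin n} :
    j.addNat n ∈ ofDiagonalHooks T ↔ j ∈ T := by
  simp [ofDiagonalHooks, castAdd_ne_addNat]

theorem ofDiagonalHooks_injective : Injective (ofDiagonalHooks (n := n)) := fun T T' h ↦ by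
  ext j
  rw [← addNat_mem_ofDiagonalHooks, h, addNat_mem_ofDiagonalHooks]

theorem conj_ofDiagonalHooks (T : Finset (Fin n)) :
    conj (ofDiagonalHooks T) = ofDiagonalHooks T := by
  ext i
  cases i using Fin.addCases with
  | left i =>
    rw [mem_conj, Fin.rev_castAdd, addNat_mem_ofDiagonalHooks, castAdd_mem_ofDiagonalHooks]
  | right j =>
    rw [Fin.natAdd_eq_addNat, mem_conj, Fin.rev_addNat, castAdd_mem_ofDiagonalHooks,
      addNat_mem_ofDiagonalHooks, Fin.rev_rev, not_not]

theorem exists_ofDiagonalHooks_eq {S : Finset (Fin (n + n))} (hS : conj S = S) :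
    ∃ T, ofDiagonalHooks T = S := by
  refine ⟨({j | j.addNat n ∈ S} : Finset (Fin n)), ?_⟩
  ext i
  cases i using Fin.addCases with
  | left i =>
    rw [castAdd_mem_ofDiagonalHooks, mem_filter_univ, ← Fin.rev_castAdd, ← mem_conj, hS]
  | right j => rw [Fin.natAdd_eq_addNat, addNat_mem_ofDiagonalHooks, mem_filter_univ]

theorem disjoint_map_castAdd_map_addNat (T : Finset (Fin n)) :
    Disjoint (Tᶜ.map (Fin.revPerm.toEmbedding.trans (Fin.castAddEmb n)))
      (T.map (Fin.addNatEmb n)) := by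
  simp [disjoint_left, (castAdd_ne_addNat _ _).symm]

theorem card_ofDiagonalHooks (T : Finset (Fin n)) : #(ofDiagonalHooks T) = n := by
  rw [ofDiagonalHooks, card_union_of_disjoint (disjoint_map_castAdd_map_addNat T), card_map,
    card_map]
  exact (card_compl_add_card T).trans (Fintype.card_fin n)

theorem sum_ofDiagonalHooks (T : Finset (Fin n)) :
    ∑ i ∈ ofDiagonalHooks T, (i : ℕ) = ∑ j ∈ T, (2 * (j : ℕ) + 1) + ∑ i ∈ range n, i := by
  have hrange : ∑ i ∈ range n, i = ∑ j ∈ Tᶜ, (j.rev : ℕ) + ∑ j ∈ T, (j.rev : ℕ) := by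
    rw [sum_compl_add_sum, ← Fin.sum_univ_eq_sum_range (fun i ↦ i)]
    exact (Equiv.sum_comp Fin.revPerm _).symm
  rw [ofDiagonalHooks, sum_union (disjoint_map_castAdd_map_addNat T), sum_map, sum_map, hrange,
    add_left_comm, ← sum_add_distrib]
  congr 1
  refine sum_congr rfl fun j _ ↦ ?_
  simp only [Fin.addNatEmb_apply, Fin.val_addNat, Fin.val_rev]
  omega

theorem card_filter_conj_eq_gradedSubsets (n k : ℕ) :
    #{S ∈ gradedSubsets (n + n) n (k + ∑ i ∈ range n, i) | conj S = S} =
      #{T : Finset (Fin n) | ∑ j ∈ T, (2 * (j : ℕ) + 1) = k} := by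
  rw [← card_image_of_injective {T : Finset (Fin n) | _} ofDiagonalHooks_injective]
  refine congrArg card (Finset.ext fun S ↦ ?_)
  simp only [mem_filter, mem_gradedSubsets, mem_image, mem_univ, true_and]
  constructor
  · rintro ⟨⟨-, hsum⟩, hS⟩
    obtain ⟨T, rfl⟩ := exists_ofDiagonalHooks_eq hS
    rw [sum_ofDiagonalHooks, Nat.add_right_cancel_iff] at hsum
    exact ⟨T, hsum, rfl⟩
  · rintro ⟨T, hT, rfl⟩
    exact ⟨⟨card_ofDiagonalHooks T, by rw [sum_ofDiagonalHooks, hT]⟩, conj_ofDiagonalHooks T⟩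

end DiagonalHooks

section Partitions

theorem card_partition_subtype {P : Multiset ℕ → Prop} {A : Finset (Multiset ℕ)}
    (hA : ∀ s, s ∈ A ↔ P s ∧ ∀ i ∈ s, 0 < i) (k : ℕ) :
    Nat.card {π : k.Partition // P π.parts} = #{s ∈ A | s.sum = k} := by
  rw [← Nat.card_eq_finsetCard]
  refine Nat.card_congr
    { toFun := fun π ↦ ⟨π.1.parts, ?_⟩
      invFun := fun s ↦ ⟨⟨s, ?_, ?_⟩, ?_⟩
      left_inv := fun _ ↦ rfl
      right_inv := fun _ ↦ rfl }
  · exact mem_filter.2 ⟨(hA _).2 ⟨π.2, fun _ ↦ π.1.parts_pos⟩, π.1.parts_sum⟩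
  · exact fun {i} ↦ ((hA s).1 (mem_filter.1 s.2).1).2 i
  · exact (mem_filter.1 s.2).2
  · exact ((hA s).1 (mem_filter.1 s.2).1).1

theorem card_partition_nodup_subtype {ι : Type*} [Fintype ι] (f : ι ↪ ℕ) (hf : ∀ i, 0 < f i)
    (k : ℕ) :
    Nat.card {π : k.Partition // π.parts.Nodup ∧ ∀ i ∈ π.parts, i ∈ Set.range f} =
      #{T : Finset ι | ∑ i ∈ T, f i = k} := by
  have hparts (s : Multiset ℕ) : s ∈ univ.image (fun T : Finset ι ↦ (T.map f).val) ↔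
      (s.Nodup ∧ ∀ i ∈ s, i ∈ Set.range f) ∧ ∀ i ∈ s, 0 < i := by
    rw [mem_image]
    constructor
    · rintro ⟨T, -, rfl⟩
      exact ⟨⟨nodup _, by simp⟩, by simp [hf]⟩
    · rintro ⟨⟨hnodup, hrange⟩, -⟩
      refine ⟨({i | f i ∈ s} : Finset ι), mem_univ _, ?_⟩
      refine (Multiset.Nodup.ext (nodup _) hnodup).2 fun i ↦ ?_
      rw [mem_val, mem_map]
      simp only [mem_filter_univ]
      refine ⟨by rintro ⟨j, hj, rfl⟩; exact hj, fun hi ↦ ?_⟩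
      obtain ⟨j, rfl⟩ := hrange i hi
      exact ⟨j, hi, rfl⟩
  have hinj : Injective fun T : Finset ι ↦ (T.map f).val :=
    val_injective.comp (map_injective f)
  rw [card_partition_subtype hparts, filter_image, card_image_of_injective _ hinj]
  rfl

theorem distinctOddPartitions_eq_card (k n : ℕ) :
    distinctOddPartitions k n = #{T : Finset (Fin n) | ∑ j ∈ T, (2 * (j : ℕ) + 1) = k} := by
  have hinj : Injective fun j : Fin n ↦ 2 * (j : ℕ) + 1 := fun i j h ↦ by
    simpa [Fin.ext_iff] using h
  have hrange (i : ℕ) : Odd i ∧ i ≤ 2 * n - 1 ↔ i ∈ Set.range fun j : Fin n ↦ 2 * (j : ℕ) + 1 := by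
    constructor
    · rintro ⟨⟨j, rfl⟩, hle⟩
      exact ⟨⟨j, by omega⟩, rfl⟩
    · rintro ⟨j, rfl⟩
      exact ⟨⟨j, rfl⟩, by dsimp only; omega⟩
  simp only [distinctOddPartitions, hrange]
  exact card_partition_nodup_subtype ⟨_, hinj⟩ (fun _ ↦ Nat.succ_pos _) k

/-- The partitions with at most `l` parts, all of them at most `m`, as multisets of positive
integers. The recursion, according to whether `m + 1` is a part, is the `q`-Pascal rule. -/
def boxMultisets : ℕ → ℕ → Finset (Multiset ℕ)
  | 0, _ => {0}
  | _ + 1, 0 => {0}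
  | l + 1, m + 1 => boxMultisets (l + 1) m ∪ (boxMultisets l (m + 1)).image ((m + 1) ::ₘ ·)

theorem mem_boxMultisets {l m : ℕ} {s : Multiset ℕ} :
    s ∈ boxMultisets l m ↔ (s.card ≤ l ∧ ∀ i ∈ s, i ≤ m) ∧ ∀ i ∈ s, 0 < i := by
  induction l, m using boxMultisets.induct generalizing s with
  | case1 m =>
    rw [boxMultisets, mem_singleton]
    exact ⟨by rintro rfl; simp, fun h ↦ Multiset.card_eq_zero.1 (Nat.le_zero.1 h.1.1)⟩
  | case2 l =>
    rw [boxMultisets, mem_singleton]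
    exact ⟨by rintro rfl; simp, fun h ↦ Multiset.eq_zero_of_forall_notMem fun i hi ↦
      (h.2 i hi).not_ge (h.1.2 i hi)⟩
  | case3 l m ih₁ ih₂ =>
    simp only [boxMultisets, mem_union, mem_image, ih₁, ih₂]
    constructor
    · rintro (h | ⟨s, h, rfl⟩)
      · grind
      · simpa using h
    · rintro ⟨⟨hcard, hle⟩, hpos⟩
      by_cases hm : m + 1 ∈ s
      · obtain ⟨s, rfl⟩ := Multiset.exists_cons_of_mem hm
        exact .inr ⟨s, by simpa using And.intro (And.intro hcard hle) hpos, rfl⟩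
      · have hne (i : ℕ) (hi : i ∈ s) : i ≠ m + 1 := fun h ↦ hm (h ▸ hi)
        exact .inl ⟨⟨hcard, fun i hi ↦ Nat.le_of_lt_succ ((hle i hi).lt_of_ne (hne i hi))⟩, hpos⟩

theorem sum_boxMultisets_succ_succ {R : Type*} [AddCommMonoid R] (l m : ℕ) (g : Multiset ℕ → R) :
    ∑ s ∈ boxMultisets (l + 1) (m + 1), g s =
      ∑ s ∈ boxMultisets (l + 1) m, g s + ∑ s ∈ boxMultisets l (m + 1), g ((m + 1) ::ₘ s) := by
  rw [boxMultisets, sum_union, sum_image fun _ _ _ _ ↦ (Multiset.cons_inj_right _).1]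
  simp only [disjoint_left, mem_boxMultisets, mem_image, not_exists]
  rintro _ h s ⟨-, rfl⟩
  simpa using h.1.2 (m + 1) (Multiset.mem_cons_self _ _)

theorem sum_powersetCard_succ_insert {α R : Type*} [DecidableEq α] [AddCommMonoid R] {a : α}
    {s : Finset α} (ha : a ∉ s) (l : ℕ) (g : Finset α → R) :
    ∑ S ∈ powersetCard (l + 1) (insert a s), g S =
      ∑ S ∈ powersetCard (l + 1) s, g S + ∑ S ∈ powersetCard l s, g (insert a S) := by
  have hnotMem {l : ℕ} {S : Finset α} (hS : S ∈ powersetCard l s) : a ∉ S :=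
    fun h ↦ ha ((mem_powersetCard.1 hS).1 h)
  rw [powersetCard_succ_insert ha, sum_union, sum_image]
  · intro S hS T hT h
    rw [← erase_insert (hnotMem hS), ← erase_insert (hnotMem hT)]
    exact congrArg (erase · a) h
  · simp only [disjoint_left, mem_image, not_exists]
    rintro _ hS S ⟨-, rfl⟩
    exact hnotMem hS (mem_insert_self a S)

-- The test function `f` plays the role of a generating function: `f x` stands for `q ^ x`.
theorem sum_boxMultisets {R : Type*} [AddCommMonoid R] (l m : ℕ) (f : ℕ → R) :
    ∑ s ∈ boxMultisets l m, f (s.sum + ∑ i ∈ range l, i) =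
      ∑ S ∈ powersetCard l (range (l + m)), f (∑ i ∈ S, i) := by
  induction l generalizing m f with
  | zero => simp [boxMultisets]
  | succ l ihl =>
    induction m generalizing f with
    | zero =>
      have hself : powersetCard (l + 1) (range (l + 1)) = {range (l + 1)} := by
        simpa using powersetCard_self (range (l + 1))
      rw [boxMultisets, add_zero, hself, sum_singleton, sum_singleton, Multiset.sum_zero, zero_add]
    | succ m ihm =>
      rw [sum_boxMultisets_succ_succ, ihm, ← add_assoc, range_add_one (n := l + 1 + m),
        sum_powersetCard_succ_insert (by simp)]
      congr 1
      calc ∑ s ∈ boxMultisets l (m + 1), f (((m + 1) ::ₘ s).sum + ∑ i ∈ range (l + 1), i)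
          = ∑ s ∈ boxMultisets l (m + 1), f (s.sum + ∑ i ∈ range l, i + (l + 1 + m)) := by
            refine sum_congr rfl fun s _ ↦ congrArg f ?_
            rw [Multiset.sum_cons, sum_range_succ]
            ring
        _ = ∑ S ∈ powersetCard l (range (l + 1 + m)), f (∑ i ∈ S, i + (l + 1 + m)) := by
            rw [ihl (m + 1) fun x ↦ f (x + (l + 1 + m)), add_right_comm, add_assoc]
        _ = ∑ S ∈ powersetCard l (range (l + 1 + m)), f (∑ i ∈ insert (l + 1 + m) S, i) := by
            refine sum_congr rfl fun S hS ↦ ?_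
            have hnotMem : l + 1 + m ∉ S := fun h ↦ notMem_range_self ((mem_powersetCard.1 hS).1 h)
            rw [sum_insert hnotMem, add_comm]

theorem rectPartitions_eq_card (k l m : ℕ) :
    rectPartitions k l m = #(gradedSubsets (l + m) l (k + ∑ i ∈ range l, i)) := by
  have hrange : powersetCard l (range (l + m)) =
      (powersetCard l univ).map (mapEmbedding (Fin.valEmbedding (n := l + m))).toEmbedding := by
    rw [← powersetCard_map, Fin.map_valEmbedding_univ, Nat.Iio_eq_range]
  have hsum := sum_boxMultisets l m fun x ↦ if x = k + ∑ i ∈ range l, i then 1 else 0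
  simp only [Nat.add_right_cancel_iff, hrange, sum_map, ← card_filter] at hsum
  rw [rectPartitions, card_partition_subtype fun _ ↦ mem_boxMultisets, hsum, gradedSubsets]
  simp

end Partitions

section Difference

theorem rectPartitions_sub_distinctOddPartitions (k n : ℕ) :
    (rectPartitions k n n : ℤ) - distinctOddPartitions k n =
      #(gradedSubsets (n + n) n (k + ∑ i ∈ range n, i)) -
        #{S ∈ gradedSubsets (n + n) n (k + ∑ i ∈ range n, i) | conj S = S} := by
  rw [rectPartitions_eq_card, distinctOddPartitions_eq_card, card_filter_conj_eq_gradedSubsets]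

theorem two_mul_sum_range_id_add (n : ℕ) : 2 * ∑ i ∈ range n, i + n = n ^ 2 := by
  induction n with
  | zero => rfl
  | succ n ih => rw [sum_range_succ]; linarith

theorem rectPartitions_sub_distinctOddPartitions_symm {n k k' : ℕ} (hk : k + k' = n ^ 2) :
    (rectPartitions k n n : ℤ) - distinctOddPartitions k n =
      rectPartitions k' n n - distinctOddPartitions k' n := by
  have hsum : k + ∑ i ∈ range n, i + (k' + ∑ i ∈ range n, i) = n * (n + n - 1) := by
    have htri := two_mul_sum_range_id_add n
    rw [Nat.mul_sub, mul_one, mul_add, ← sq]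
    omega
  rw [rectPartitions_sub_distinctOddPartitions, rectPartitions_sub_distinctOddPartitions,
    card_gradedSubsets_rev hsum, card_filter_conj_eq_gradedSubsets_rev hsum]

theorem rectPartitions_sub_distinctOddPartitions_le_succ {n k : ℕ} (hk : 2 * k < n ^ 2) :
    (rectPartitions k n n : ℤ) - distinctOddPartitions k n ≤
      rectPartitions (k + 1) n n - distinctOddPartitions (k + 1) n := by
  have hs : 2 * (k + ∑ i ∈ range n, i) + n < (n + n) * n := by
    have htri := two_mul_sum_range_id_add n
    linarith
  rw [rectPartitions_sub_distinctOddPartitions, rectPartitions_sub_distinctOddPartitions,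
    add_right_comm k 1]
  exact card_gradedSubsets_sub_le hs

end Difference

end Stanley

/-- Stanley's theorem: for `n ≥ 1`, the sequence `c_k = p_k(n,n) − b_k(n)`,
`0 ≤ k ≤ n²`, is symmetric and unimodal. -/
theorem stanley_symmetric_unimodal (n : ℕ) (hn : 1 ≤ n) :
    (∀ k : ℕ, k ≤ n ^ 2 →
      (rectPartitions k n n : ℤ) - (distinctOddPartitions k n : ℤ) =
        (rectPartitions (n ^ 2 - k) n n : ℤ) - (distinctOddPartitions (n ^ 2 - k) n : ℤ)) ∧
    (∀ k : ℕ, 1 ≤ k → 2 * k ≤ n ^ 2 →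
      (rectPartitions (k - 1) n n : ℤ) - (distinctOddPartitions (k - 1) n : ℤ) ≤
        (rectPartitions k n n : ℤ) - (distinctOddPartitions k n : ℤ)) := by
  constructor
  · intro k hk
    exact Stanley.rectPartitions_sub_distinctOddPartitions_symm (Nat.add_sub_cancel' hk)
  · intro k hk hkn
    obtain ⟨k, rfl⟩ := Nat.exists_eq_add_of_le' hk
    exact Stanley.rectPartitions_sub_distinctOddPartitions_le_succ (by omega)
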